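/- Let φ be a TSL formula, let T_P be the set of predicate terms occurring in φ, and for each output name s let T^s consist of the update terms [s ↜ τ] occurring in φ together with the self-update [s ↜ s]. Let ψ be the LTL formula over atomic propositions T_P (environment/input propositions) and ⋃_s T^s (system/output propositions) obtained from φ by reading each predicate term and each update term as an atomic proposition, conjoined with G ⋀_{s ∈ N_O} ⋁_{τ ∈ T^s} (τ ∧ ⋀_{τ' ∈ T^s, τ' ≠ τ} ¬τ'). Then every Mealy machine 𝕄 = (M, m_I, δ, ℓ̂) with L(𝕄) ⊆ L(ψ) induces a CFM M' with configurations M, initial configuration m_I, configuration update δ, and program update ℓ(P, m, s) = the unique function term τ with [s ↜ τ] ∈ ℓ̂(P, m), such that for every assignment ⟨·⟩ and every run r of M' compatible with ⟨·⟩, the induced computation ς_r satisfies ς_r ⊨ φ under ⟨·⟩. In particular, for every assignment there exists a computation satisfying φ. -/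

import Mathlib

set_option autoImplicit false

namespace TSLspec

/-- Function terms over input-signal names `I`, output-signal names `O` and
function names `F` with arities `arF`.  The constructor `init s` is the fresh
`0`-ary constant term `init_s` providing the initial value of the output
signal `s`. -/
inductive FTerm (I O F : Type) (arF : F → ℕ) : Type where
  | inp  : I → FTerm I O F arF
  | out  : O → FTerm I O F arF
  | init : O → FTerm I O F arF
  | app  : (f : F) → (Fin (arF f) → FTerm I O F arF) → FTerm I O F arF

variable {I O F P : Type} {arF : F → ℕ} {arP : P → ℕ}

/-- Predicate terms `p(τ₀, …, τ_{n-1})`. -/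
structure PTerm (I O F P : Type) (arF : F → ℕ) (arP : P → ℕ) : Type where
  pred : P
  args : Fin (arP pred) → FTerm I O F arF

/-- A computation step is a map from output names to function terms; a
computation is an infinite sequence of computation steps. -/
abbrev Computation (I O F : Type) (arF : F → ℕ) : Type :=
  ℕ → O → FTerm I O F arF

/-- Substitute each output name `s` by `c s`. -/
def substOut (c : O → FTerm I O F arF) : FTerm I O F arF → FTerm I O F arF
  | .inp i => .inp i
  | .out s => c s
  | .init s => .init s
  | .app f a => .app f (fun k => substOut c (a k))

/-- Substitute each output name `s` by the constant `init_s`. -/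
def substInit : FTerm I O F arF → FTerm I O F arF
  | .inp i => .inp i
  | .out s => .init s
  | .init s => .init s
  | .app f a => .app f (fun k => substInit (a k))

/-- The evaluation function `η`: `η(ς,t,s) = s` for input names `s`;
`η(ς,0,s) = init_s` for output names `s`; `η(ς,t,s) = η(ς,t-1,ς(t-1)(s))` for
output names `s` and `t > 0`; and `η` commutes with applications. -/
def eta (ς : Computation I O F arF) : ℕ → FTerm I O F arF → FTerm I O F arF
  | 0, τ => substInit τ
  | t + 1, τ => eta ς t (substOut (ς t) τ)

/-- `η` applied to a predicate term (argumentwise). -/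
def etaP (ς : Computation I O F arF) (t : ℕ)
    (pt : PTerm I O F P arF arP) : PTerm I O F P arF arP :=
  ⟨pt.pred, fun k => eta ς t (pt.args k)⟩

/-- An assignment `⟨·⟩`: values for input names, an `n`-ary function on
values for each `n`-ary function name, an `n`-ary Boolean predicate on values
for each `n`-ary predicate name, and an initial value `⟨init_s⟩` for each
output name `s`. -/
structure Assignment (V I O F P : Type) (arF : F → ℕ) (arP : P → ℕ) :
    Type where
  inpVal  : I → V
  fnVal   : (f : F) → (Fin (arF f) → V) → V
  prVal   : (p : P) → (Fin (arP p) → V) → Bool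
  initVal : O → V

variable {V : Type}

/-- Evaluation of a function term under an assignment, in an environment
`env` interpreting the output names.  For terms containing no output names
the result is independent of `env`. -/
def evalF (A : Assignment V I O F P arF arP) (env : O → V) :
    FTerm I O F arF → V
  | .inp i => A.inpVal i
  | .out s => env s
  | .init s => A.initVal s
  | .app f a => A.fnVal f (fun k => evalF A env (a k))

/-- Evaluation of a predicate term. -/
def evalP (A : Assignment V I O F P arF arP) (env : O → V)
    (pt : PTerm I O F P arF arP) : Bool :=
  A.prVal pt.pred (fun k => evalF A env (pt.args k))

/-- TSL formulas. -/
inductive Formula (I O F P : Type) (arF : F → ℕ) (arP : P → ℕ) : Type where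
  | predT  : PTerm I O F P arF arP → Formula I O F P arF arP
  | updT   : O → FTerm I O F arF → Formula I O F P arF arP
  | notT   : Formula I O F P arF arP → Formula I O F P arF arP
  | andT   : Formula I O F P arF arP → Formula I O F P arF arP →
             Formula I O F P arF arP
  | nextT  : Formula I O F P arF arP → Formula I O F P arF arP
  | untilT : Formula I O F P arF arP → Formula I O F P arF arP →
             Formula I O F P arF arP

/-- TSL satisfaction `ς,t ⊨ φ` (under the assignment `A`).  A predicate term
is satisfied iff its `η`-unfolding evaluates to `true` (the unfolding
contains no output names, so the value is independent of the environment and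
we quantify over all environments); an update term `[s ↜ τ]` is satisfied
iff `ς(t)(s) = τ` syntactically. -/
def Sat (A : Assignment V I O F P arF arP) (ς : Computation I O F arF) :
    Formula I O F P arF arP → ℕ → Prop
  | .predT pt, t => ∀ env : O → V, evalP A env (etaP ς t pt) = true
  | .updT s τ, t => ς t s = τ
  | .notT ψ, t => ¬ Sat A ς ψ t
  | .andT ψ θ, t => Sat A ς ψ t ∧ Sat A ς θ t
  | .nextT ψ, t => Sat A ς ψ (t + 1)
  | .untilT θ ψ, t =>
      ∃ u, t ≤ u ∧ Sat A ς ψ u ∧ ∀ t', t ≤ t' → t' < u → Sat A ς θ t'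

/-- A TSL formula is realizable iff some computation satisfies it under every
assignment (over every set of values). -/
def Realizable (φ : Formula I O F P arF arP) : Prop :=
  ∃ ς : Computation I O F arF,
    ∀ (V : Type) (A : Assignment V I O F P arF arP), Sat A ς φ 0

/- Derived TSL operators. -/

/-- A tautology (built from the formula `θ`). -/
def tslTrue (θ : Formula I O F P arF arP) : Formula I O F P arF arP :=
  .notT (.andT θ (.notT θ))

def tslFalse (θ : Formula I O F P arF arP) : Formula I O F P arF arP :=
  .notT (tslTrue θ)

def tslOr (a b : Formula I O F P arF arP) : Formula I O F P arF arP :=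
  .notT (.andT (.notT a) (.notT b))

def tslImp (a b : Formula I O F P arF arP) : Formula I O F P arF arP :=
  .notT (.andT a (.notT b))

def tslIff (a b : Formula I O F P arF arP) : Formula I O F P arF arP :=
  .andT (tslImp a b) (tslImp b a)

/-- Finally: `F θ = true 𝒰 θ`. -/
def tslF (base θ : Formula I O F P arF arP) : Formula I O F P arF arP :=
  .untilT (tslTrue base) θ

/-- Always: `G θ = ¬ F ¬ θ`. -/
def tslG (base θ : Formula I O F P arF arP) : Formula I O F P arF arP :=
  .notT (tslF base (.notT θ))

def bigAndT (base : Formula I O F P arF arP)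
    (l : List (Formula I O F P arF arP)) : Formula I O F P arF arP :=
  l.foldr .andT (tslTrue base)

def bigOrT (base : Formula I O F P arF arP)
    (l : List (Formula I O F P arF arP)) : Formula I O F P arF arP :=
  l.foldr tslOr (tslFalse base)

end TSLspec
namespace TSLspec

variable {I O F P : Type} {arF : F → ℕ} {arP : P → ℕ} {V : Type}

/-- A Control Flow Model (CFM): finite sets `TP` of predicate terms and `TF`
of function terms, a finite set `Q` of configurations with initial
configuration `qI`, a configuration update `trans` and a program update
`label`. -/
structure CFM (I O F P : Type) (arF : F → ℕ) (arP : P → ℕ) : Type 1 where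
  TP : Finset (PTerm I O F P arF arP)
  TF : Finset (FTerm I O F arF)
  Q : Type
  finQ : Finite Q
  qI : Q
  trans : Set (PTerm I O F P arF arP) → Q → Q
  label : Set (PTerm I O F P arF arP) → Q → O → FTerm I O F arF

/-- An infinite sequence of computation steps and configurations. -/
abbrev CFM.RunSeq (M : CFM I O F P arF arP) : Type :=
  ℕ → (O → FTerm I O F arF) × M.Q

/-- The computation induced by a run. -/
def CFM.RunSeq.comp {M : CFM I O F P arF arP} (r : M.RunSeq) :
    Computation I O F arF := fun t => (r t).1

/-- A run starts in the initial configuration. -/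
def CFM.IsRun (M : CFM I O F P arF arP) (r : M.RunSeq) : Prop :=
  (r 0).2 = M.qI

/-- `P_t`: the set of predicate terms of `M.TP` whose `η`-unfolding along `ς`
at time `t` evaluates to `true` under the assignment `A`. -/
def truePreds (M : CFM I O F P arF arP) (A : Assignment V I O F P arF arP)
    (ς : Computation I O F arF) (t : ℕ) :
    Set (PTerm I O F P arF arP) :=
  {pt | pt ∈ M.TP ∧ ∀ env : O → V, evalP A env (etaP ς t pt) = true}

/-- Compatibility of a run with an assignment. -/
def Compatible (M : CFM I O F P arF arP) (A : Assignment V I O F P arF arP)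
    (r : M.RunSeq) : Prop :=
  ∀ t : ℕ,
    (∀ s : O, (r t).1 s = M.label (truePreds M A r.comp t) (r t).2 s) ∧
    (r (t + 1)).2 = M.trans (truePreds M A r.comp t) (r t).2

end TSLspec
namespace TSLspec

/-- LTL formulas over atomic propositions `AP`. -/
inductive LTL (AP : Type) : Type where
  | atom   : AP → LTL AP
  | notL   : LTL AP → LTL AP
  | andL   : LTL AP → LTL AP → LTL AP
  | nextL  : LTL AP → LTL AP
  | untilL : LTL AP → LTL AP → LTL AP

/-- LTL satisfaction `σ,t ⊨ φ` over sequences `σ : ℕ → Set AP`. -/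
def LSat {AP : Type} (σ : ℕ → Set AP) : LTL AP → ℕ → Prop
  | .atom a, t => a ∈ σ t
  | .notL ψ, t => ¬ LSat σ ψ t
  | .andL ψ θ, t => LSat σ ψ t ∧ LSat σ θ t
  | .nextL ψ, t => LSat σ ψ (t + 1)
  | .untilL θ ψ, t =>
      ∃ u, t ≤ u ∧ LSat σ ψ u ∧ ∀ t', t ≤ t' → t' < u → LSat σ θ t'

/-- The language of an LTL formula. -/
def LLang {AP : Type} (ψ : LTL AP) : Set (ℕ → Set AP) :=
  {σ | LSat σ ψ 0}

/- Derived LTL operators. -/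

def ltrue {AP : Type} (α : LTL AP) : LTL AP := .notL (.andL α (.notL α))

def lfalse {AP : Type} (α : LTL AP) : LTL AP := .notL (ltrue α)

def lorL {AP : Type} (x y : LTL AP) : LTL AP :=
  .notL (.andL (.notL x) (.notL y))

/-- Always: `G θ = ¬(true 𝒰 ¬θ)`. -/
def lG {AP : Type} (α θ : LTL AP) : LTL AP :=
  .notL (.untilL (ltrue α) (.notL θ))

def bigAndL {AP : Type} (α : LTL AP) (l : List (LTL AP)) : LTL AP :=
  l.foldr .andL (ltrue α)

def bigOrL {AP : Type} (α : LTL AP) (l : List (LTL AP)) : LTL AP :=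
  l.foldr lorL (lfalse α)

end TSLspec
namespace TSLspec

variable {I O F P : Type} {arF : F → ℕ} {arP : P → ℕ}

/-- Atomic propositions for the LTL encoding: predicate terms (input
propositions) and update terms `[s ↜ τ]`, encoded as pairs `(s, τ)`
(output propositions). -/
abbrev AtomT (I O F P : Type) (arF : F → ℕ) (arP : P → ℕ) : Type :=
  PTerm I O F P arF arP ⊕ (O × FTerm I O F arF)

/-- Reading each predicate term and each update term of a TSL formula as an
atomic proposition yields an LTL formula. -/
def toLTL : Formula I O F P arF arP → LTL (AtomT I O F P arF arP)
  | .predT pt => .atom (.inl pt)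
  | .updT s τ => .atom (.inr (s, τ))
  | .notT ψ => .notL (toLTL ψ)
  | .andT ψ θ => .andL (toLTL ψ) (toLTL θ)
  | .nextT ψ => .nextL (toLTL ψ)
  | .untilT θ ψ => .untilL (toLTL θ) (toLTL ψ)

/-- The predicate terms occurring in a TSL formula. -/
def predTermsList : Formula I O F P arF arP → List (PTerm I O F P arF arP)
  | .predT pt => [pt]
  | .updT _ _ => []
  | .notT ψ => predTermsList ψ
  | .andT ψ θ => predTermsList ψ ++ predTermsList θ
  | .nextT ψ => predTermsList ψ
  | .untilT θ ψ => predTermsList θ ++ predTermsList ψ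

/-- The update terms occurring in a TSL formula (as pairs `(s, τ)`). -/
def updTermsList : Formula I O F P arF arP → List (O × FTerm I O F arF)
  | .predT _ => []
  | .updT s τ => [(s, τ)]
  | .notT ψ => updTermsList ψ
  | .andT ψ θ => updTermsList ψ ++ updTermsList θ
  | .nextT ψ => updTermsList ψ
  | .untilT θ ψ => updTermsList θ ++ updTermsList ψ

/-- `T^s_{◁/id}`: the update terms for the output name `s` occurring in `φ`
together with the self update `[s ↜ s]`. -/
def updIdTerms [DecidableEq O] (φ : Formula I O F P arF arP) (s : O) :
    List (FTerm I O F arF) :=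
  ((updTermsList φ).filter (fun u => u.1 = s)).map Prod.snd ++ [.out s]

open Classical in
/-- For the output name `s`: exactly one update proposition of
`T^s_{◁/id}` holds, i.e. `⋁_{τ ∈ T^s} (τ ∧ ⋀_{τ' ∈ T^s, τ' ≠ τ} ¬ τ')`. -/
noncomputable def exactlyOne [DecidableEq O] (φ : Formula I O F P arF arP)
    (s : O) : LTL (AtomT I O F P arF arP) :=
  bigOrL (toLTL φ)
    ((updIdTerms φ s).map (fun τ =>
      LTL.andL (.atom (.inr (s, τ)))
        (bigAndL (toLTL φ)
          (((updIdTerms φ s).filter (fun τ' => τ' ≠ τ)).map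
            (fun τ' => LTL.notL (.atom (.inr (s, τ'))))))))

/-- The LTL encoding `ψ` of the TSL formula `φ`: `φ` (with terms read as
atomic propositions) conjoined with
`G ⋀_{s ∈ N_O} ⋁_{τ ∈ T^s} (τ ∧ ⋀_{τ' ∈ T^s, τ' ≠ τ} ¬ τ')`. -/
noncomputable def ltlEncoding [DecidableEq O] [Fintype O]
    (φ : Formula I O F P arF arP) : LTL (AtomT I O F P arF arP) :=
  .andL (toLTL φ)
    (lG (toLTL φ)
      (bigAndL (toLTL φ)
        ((Finset.univ : Finset O).toList.map (exactlyOne φ))))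

/-- A Mealy machine with input letters `Λi` and output letters `Λo`: a finite
state set `M` with initial state `mI`, transition function `trans` and output
function `out`. -/
structure Mealy (Λi Λo : Type) : Type 1 where
  M : Type
  finM : Finite M
  mI : M
  trans : Λi → M → M
  out : Λi → M → Λo

/-- The state sequence of a Mealy machine on an input sequence. -/
def Mealy.states {Λi Λo : Type} (𝕄 : Mealy Λi Λo) (ι : ℕ → Λi) : ℕ → 𝕄.M
  | 0 => 𝕄.mI
  | t + 1 => 𝕄.trans (ι t) (𝕄.states ι t)

/-- The sequence over `2^{AP}` produced by a Mealy machine (over subsets of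
input and output propositions) on an input sequence `ι`:
`σ(t) = ι(t) ∪ ℓ̂(ι(t), m_t)`. -/
def mealyWord {a b : Type} (𝕄 : Mealy (Set a) (Set b)) (ι : ℕ → Set a) :
    ℕ → Set (a ⊕ b) :=
  fun t => (Sum.inl '' ι t) ∪ (Sum.inr '' 𝕄.out (ι t) (𝕄.states ι t))

/-- The language of a Mealy machine, with input letters ranging over subsets
of the designated set `TPset` of input propositions. -/
def mealyLang {a b : Type} (𝕄 : Mealy (Set a) (Set b)) (TPset : Set a) :
    Set (ℕ → Set (a ⊕ b)) :=
  {σ | ∃ ι : ℕ → Set a, (∀ t, ι t ⊆ TPset) ∧ σ = mealyWord 𝕄 ι}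

open Classical in
/-- The CFM induced by a Mealy machine realizing the LTL encoding of `φ`:
configurations are the Mealy states, the configuration update is the Mealy
transition function, and the program update assigns `ℓ(P, m, s)` the unique
function term `τ` with `[s ↜ τ] ∈ ℓ̂(P, m)`. -/
noncomputable def inducedCFM (φ : Formula I O F P arF arP)
    (𝕄 : Mealy (Set (PTerm I O F P arF arP)) (Set (O × FTerm I O F arF))) :
    CFM I O F P arF arP where
  TP := (predTermsList φ).toFinset
  TF := ((updTermsList φ).map Prod.snd).toFinset
  Q := 𝕄.M
  finQ := 𝕄.finM
  qI := 𝕄.mI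
  trans := 𝕄.trans
  label := fun Pm q s =>
    if h : ∃! τ : FTerm I O F arF, (s, τ) ∈ 𝕄.out Pm q then h.exists.choose
    else .out s

/-!
Feed the Mealy machine the sets `P_t` of predicate terms that hold along a run of the induced CFM.
Its output word then satisfies the LTL encoding. The exactly-one conjunct makes the program update
well defined, so the word contains `[s ↜ τ]` at time `t` iff the run performs that update, and the
word satisfies each atomic proposition iff the computation satisfies the corresponding term.

For the existence of a compatible run: the sets `P_t` depend on a computation only through the
current values of the output signals, so the CFM can be executed step by step on such values.
-/

section LTLSemantics

variable {AP : Type} {σ : ℕ → Set AP} {t : ℕ}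

theorem lsat_ltrue (α : LTL AP) : LSat σ (ltrue α) t :=
  fun h => h.2 h.1

theorem lsat_lorL {x y : LTL AP} : LSat σ (lorL x y) t ↔ LSat σ x t ∨ LSat σ y t := by
  simp only [lorL, LSat, not_and_or, not_not]

theorem lsat_lG {α θ : LTL AP} : LSat σ (lG α θ) t ↔ ∀ u, t ≤ u → LSat σ θ u := by
  simp only [lG, LSat, lsat_ltrue, implies_true, and_true, not_exists, not_and, not_not]

theorem lsat_bigAndL {α : LTL AP} {l : List (LTL AP)} :
    LSat σ (bigAndL α l) t ↔ ∀ x ∈ l, LSat σ x t := by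
  induction l with
  | nil => exact iff_of_true (lsat_ltrue α) (List.forall_mem_nil _)
  | cons a l ih => rw [List.forall_mem_cons, ← ih]; rfl

theorem lsat_bigOrL {α : LTL AP} {l : List (LTL AP)} :
    LSat σ (bigOrL α l) t ↔ ∃ x ∈ l, LSat σ x t := by
  induction l with
  | nil => exact iff_of_false (· (lsat_ltrue α)) fun ⟨_, hx, _⟩ => List.not_mem_nil hx
  | cons a l ih => rw [List.exists_mem_cons_iff, ← ih]; exact lsat_lorL

end LTLSemantics

section Encoding

variable {σ : ℕ → Set (AtomT I O F P arF arP)} {t : ℕ}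

theorem lsat_exactlyOne [DecidableEq O] {φ : Formula I O F P arF arP} {s : O} :
    LSat σ (exactlyOne φ s) t ↔ ∃! τ, τ ∈ updIdTerms φ s ∧ Sum.inr (s, τ) ∈ σ t := by
  simp only [exactlyOne, lsat_bigOrL, List.mem_map, exists_exists_and_eq_and]
  simp only [LSat, lsat_bigAndL, List.forall_mem_map, List.mem_filter, decide_eq_true_eq]
  constructor
  · rintro ⟨τ, hτ, hτσ, huniq⟩
    exact ⟨τ, ⟨hτ, hτσ⟩, fun τ' h => by_contra fun hne => huniq τ' ⟨h.1, hne⟩ h.2⟩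
  · rintro ⟨τ, ⟨hτ, hτσ⟩, huniq⟩
    exact ⟨τ, hτ, hτσ, fun τ' hτ' hτ'σ => hτ'.2 (huniq τ' ⟨hτ'.1, hτ'σ⟩)⟩

theorem lsat_ltlEncoding [DecidableEq O] [Fintype O] {φ : Formula I O F P arF arP} :
    LSat σ (ltlEncoding φ) t ↔ LSat σ (toLTL φ) t ∧
      ∀ u, t ≤ u → ∀ s, ∃! τ, τ ∈ updIdTerms φ s ∧ Sum.inr (s, τ) ∈ σ u := by
  simp only [ltlEncoding, LSat, lsat_lG, lsat_bigAndL, List.forall_mem_map, Finset.mem_toList,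
    Finset.mem_univ, true_imp_iff, lsat_exactlyOne]

theorem lsat_toLTL_iff_sat {V : Type} {A : Assignment V I O F P arF arP}
    {ς : Computation I O F arF} {φ : Formula I O F P arF arP}
    (hpred : ∀ pt ∈ predTermsList φ, ∀ t, Sum.inl pt ∈ σ t ↔ Sat A ς (.predT pt) t)
    (hupd : ∀ u ∈ updTermsList φ, ∀ t, Sum.inr u ∈ σ t ↔ ς t u.1 = u.2) :
    LSat σ (toLTL φ) t ↔ Sat A ς φ t := by
  induction φ generalizing t with
  | predT pt => exact hpred pt (List.mem_singleton_self pt) t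
  | updT s τ => exact hupd (s, τ) (List.mem_singleton_self _) t
  | notT ψ ih => exact not_congr (ih hpred hupd)
  | nextT ψ ih => exact ih hpred hupd
  | andT ψ θ ihψ ihθ =>
    rw [predTermsList, List.forall_mem_append] at hpred
    rw [updTermsList, List.forall_mem_append] at hupd
    exact and_congr (ihψ hpred.1 hupd.1) (ihθ hpred.2 hupd.2)
  | untilT θ ψ ihθ ihψ =>
    rw [predTermsList, List.forall_mem_append] at hpred
    rw [updTermsList, List.forall_mem_append] at hupd
    simp only [toLTL, LSat, Sat, ihθ hpred.1 hupd.1, ihψ hpred.2 hupd.2]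

end Encoding

section OutputValues

variable {V : Type} (A : Assignment V I O F P arF arP) (ς : Computation I O F arF)

theorem evalF_substInit (env : O → V) (τ : FTerm I O F arF) :
    evalF A env (substInit τ) = evalF A A.initVal τ := by
  induction τ with
  | inp | out | init => rfl
  | app f a ih => simp only [substInit, evalF, ih]

theorem evalF_substOut (env : O → V) (c : O → FTerm I O F arF) (τ : FTerm I O F arF) :
    evalF A env (substOut c τ) = evalF A (fun s => evalF A env (c s)) τ := by
  induction τ with
  | inp | out | init => rfl
  | app f a ih => simp only [substOut, evalF, ih]

/-- The values held by the output signals at each time when the computation `ς` is executed under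
`A`. This is the operational counterpart of `eta`: it propagates values forwards in time, where
`eta` unfolds terms backwards. -/
def outputValues : ℕ → O → V
  | 0 => A.initVal
  | t + 1 => fun s => evalF A (outputValues t) (ς t s)

theorem evalF_eta (env : O → V) (t : ℕ) (τ : FTerm I O F arF) :
    evalF A env (eta ς t τ) = evalF A (outputValues A ς t) τ := by
  induction t generalizing τ with
  | zero => exact evalF_substInit A env τ
  | succ t ih => rw [eta, ih, evalF_substOut, outputValues]

theorem sat_predT_iff {pt : PTerm I O F P arF arP} {t : ℕ} :
    Sat A ς (.predT pt) t ↔ evalP A (outputValues A ς t) pt = true := by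
  have : Nonempty (O → V) := ⟨A.initVal⟩
  simp only [Sat, evalP, etaP, evalF_eta, forall_const]

end OutputValues

namespace CFM

variable {V : Type} (M : CFM I O F P arF arP) (A : Assignment V I O F P arF arP)

/-- The predicate terms of `M` that hold when the output signals have the values `v`. -/
def predsAt (v : O → V) : Set (PTerm I O F P arF arP) :=
  {pt | pt ∈ M.TP ∧ evalP A v pt = true}

theorem truePreds_eq_predsAt (ς : Computation I O F arF) (t : ℕ) :
    truePreds M A ς t = M.predsAt A (outputValues A ς t) :=
  Set.ext fun _ => and_congr_right' (sat_predT_iff A ς)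

/-- The execution of `M` under `A`: at each time, the values of the output signals and the
configuration. -/
def exec : ℕ → (O → V) × M.Q
  | 0 => (A.initVal, M.qI)
  | t + 1 =>
    let (v, q) := exec t
    (fun s => evalF A v (M.label (M.predsAt A v) q s), M.trans (M.predsAt A v) q)

/-- The run of `M` recorded along its execution under `A`. -/
def execRun : M.RunSeq := fun t =>
  let (v, q) := M.exec A t
  (M.label (M.predsAt A v) q, q)

theorem outputValues_execRun (t : ℕ) :
    outputValues A (M.execRun A).comp t = (M.exec A t).1 := by
  induction t with
  | zero => rfl
  | succ t ih => rw [outputValues, ih]; rfl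

theorem isRun_execRun : M.IsRun (M.execRun A) := rfl

theorem compatible_execRun : Compatible M A (M.execRun A) := by
  intro t
  rw [truePreds_eq_predsAt, outputValues_execRun]
  exact ⟨fun _ => rfl, rfl⟩

end CFM

theorem inl_mem_mealyWord {a b : Type} {𝕄 : Mealy (Set a) (Set b)} {ι : ℕ → Set a} {t : ℕ}
    {x : a} : Sum.inl x ∈ mealyWord 𝕄 ι t ↔ x ∈ ι t := by
  simp [mealyWord]

theorem inr_mem_mealyWord {a b : Type} {𝕄 : Mealy (Set a) (Set b)} {ι : ℕ → Set a} {t : ℕ}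
    {y : b} : Sum.inr y ∈ mealyWord 𝕄 ι t ↔ y ∈ 𝕄.out (ι t) (𝕄.states ι t) := by
  simp [mealyWord]

section InducedCFM

variable {V : Type} {A : Assignment V I O F P arF arP} {φ : Formula I O F P arF arP}
  {𝕄 : Mealy (Set (PTerm I O F P arF arP)) (Set (O × FTerm I O F arF))}
  {r : (inducedCFM φ 𝕄).RunSeq}

theorem mem_inducedCFM_TP {pt : PTerm I O F P arF arP} :
    pt ∈ (inducedCFM φ 𝕄).TP ↔ pt ∈ predTermsList φ :=
  @List.mem_toFinset _ (Classical.decEq _) _ _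

theorem inducedCFM_label_eq_iff {Pm : Set (PTerm I O F P arF arP)} {q : 𝕄.M} {s : O}
    (h : ∃! τ, (s, τ) ∈ 𝕄.out Pm q) {τ : FTerm I O F arF} :
    (inducedCFM φ 𝕄).label Pm q s = τ ↔ (s, τ) ∈ 𝕄.out Pm q := by
  have hlabel : (inducedCFM φ 𝕄).label Pm q s = h.exists.choose := dif_pos h
  have hmem := h.exists.choose_spec
  rw [hlabel]
  exact ⟨fun hτ => hτ ▸ hmem, h.unique hmem⟩

theorem config_eq_mealy_states (hrun : (inducedCFM φ 𝕄).IsRun r)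
    (hcomp : Compatible (inducedCFM φ 𝕄) A r) (t : ℕ) :
    (r t).2 = 𝕄.states (truePreds (inducedCFM φ 𝕄) A r.comp) t := by
  induction t with
  | zero => exact hrun
  | succ t ih => rw [(hcomp t).2, ih]; rfl

theorem inr_mem_mealyWord_iff_comp_eq (hrun : (inducedCFM φ 𝕄).IsRun r)
    (hcomp : Compatible (inducedCFM φ 𝕄) A r) {s : O} {t : ℕ}
    (huniq : ∃! τ, Sum.inr (s, τ) ∈ mealyWord 𝕄 (truePreds (inducedCFM φ 𝕄) A r.comp) t)
    {τ : FTerm I O F arF} :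
    Sum.inr (s, τ) ∈ mealyWord 𝕄 (truePreds (inducedCFM φ 𝕄) A r.comp) t ↔
      r.comp t s = τ := by
  simp only [inr_mem_mealyWord] at huniq ⊢
  rw [CFM.RunSeq.comp, (hcomp t).1 s, config_eq_mealy_states hrun hcomp t]
  exact (inducedCFM_label_eq_iff huniq).symm

theorem sat_of_lsat_ltlEncoding [DecidableEq O] [Fintype O]
    (hOut : ∀ Pm m, 𝕄.out Pm m ⊆ {u | u.2 ∈ updIdTerms φ u.1})
    (hrun : (inducedCFM φ 𝕄).IsRun r) (hcomp : Compatible (inducedCFM φ 𝕄) A r)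
    (hψ : LSat (mealyWord 𝕄 (truePreds (inducedCFM φ 𝕄) A r.comp)) (ltlEncoding φ) 0) :
    Sat A r.comp φ 0 := by
  obtain ⟨hφ, hone⟩ := lsat_ltlEncoding.1 hψ
  refine (lsat_toLTL_iff_sat ?_ ?_).1 hφ
  · intro pt hpt t
    exact inl_mem_mealyWord.trans (and_iff_right (mem_inducedCFM_TP.2 hpt))
  · intro u _ t
    refine inr_mem_mealyWord_iff_comp_eq hrun hcomp ?_
    obtain ⟨τ, ⟨-, hτ⟩, huniq⟩ := hone t t.zero_le u.1
    exact ⟨τ, hτ, fun τ' hτ' => huniq τ' ⟨hOut _ _ (inr_mem_mealyWord.1 hτ'), hτ'⟩⟩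

end InducedCFM

/-- **Theorem 1 of the paper.**  Let `φ` be a TSL formula and
`ψ` its LTL encoding over the input propositions `T_P` (the predicate terms
occurring in `φ`) and the output propositions `⋃_s T^s_{◁/id}`.  Every Mealy
machine `𝕄` over these propositions with `L(𝕄) ⊆ L(ψ)` induces a CFM such
that for every assignment `⟨·⟩`, every run compatible with `⟨·⟩` induces a
computation satisfying `φ` under `⟨·⟩`.  In particular, for every assignment
there exists a computation satisfying `φ`. -/
theorem mealy_to_cfm_sound [DecidableEq O] [Fintype O]
    (φ : Formula I O F P arF arP)
    (𝕄 : Mealy (Set (PTerm I O F P arF arP)) (Set (O × FTerm I O F arF)))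
    (hOut : ∀ (Pm : Set (PTerm I O F P arF arP)) (m : 𝕄.M),
        𝕄.out Pm m ⊆ {u : O × FTerm I O F arF | u.2 ∈ updIdTerms φ u.1})
    (hL : mealyLang 𝕄 {pt | pt ∈ predTermsList φ} ⊆ LLang (ltlEncoding φ)) :
    (∀ (V : Type) (A : Assignment V I O F P arF arP)
        (r : (inducedCFM φ 𝕄).RunSeq),
        (inducedCFM φ 𝕄).IsRun r → Compatible (inducedCFM φ 𝕄) A r →
        Sat A r.comp φ 0) ∧
    (∀ (V : Type) (A : Assignment V I O F P arF arP),
        ∃ ς : Computation I O F arF, Sat A ς φ 0) := by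
  have hsat : ∀ (V : Type) (A : Assignment V I O F P arF arP) (r : (inducedCFM φ 𝕄).RunSeq),
      (inducedCFM φ 𝕄).IsRun r → Compatible (inducedCFM φ 𝕄) A r → Sat A r.comp φ 0 :=
    fun V A r hrun hcomp => sat_of_lsat_ltlEncoding hOut hrun hcomp <|
      hL ⟨truePreds (inducedCFM φ 𝕄) A r.comp, fun _ _ hpt => mem_inducedCFM_TP.1 hpt.1, rfl⟩
  exact ⟨hsat, fun V A => ⟨_, hsat V A _ (CFM.isRun_execRun _ A) (CFM.compatible_execRun _ A)⟩⟩

end TSLspec
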